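/- arXiv:1204.4794 — 5 statements merged into one kernel-verified Lean document; each statement's English description precedes it below -/
import Mathlib

section
/- Let U ⊆ ℝ² be open, and let f₁, f₂, θ₁, θ₂, Ψ : U → ℝ be smooth with f₁, f₂ nowhere zero. Define b = -θ₁θ₂ + (1/f₂)∂₂θ₁ and c = θ₁θ₂ + (1/f₁)∂₁θ₂, and let A₁, A₂ : U → M₅(ℝ) be the matrix-valued functions A₁ = [[θ₁/2, -(1+Ψ)/2, b/2, θ₁/2, 0],[1,0,0,-1,(1+Ψ)/2],[0,0,0,0,-b/2],[0,1,0,0,-θ₁/2],[0,-1,0,0,-θ₁/2]] and A₂ = [[-θ₂/2, -c/2, -(1-Ψ)/2, θ₂/2, 0],[0,0,0,0,c/2],[1,0,0,1,(1-Ψ)/2],[0,0,-1,0,-θ₂/2],[0,0,-1,0,θ₂/2]]. Then the coordinate form of the structural equation dω + (1/2)[ω,ω] = 0 for the matrix-valued 1-form ω = f₁A₁ dx₁ + f₂A₂ dx₂, namely the matrix identity ∂₁(f₂A₂) - ∂₂(f₁A₁) + f₁f₂(A₁A₂ - A₂A₁) = 0 on U, holds if and only if the following four scalar equations hold on U: (E1)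 ∂₂f₁ + (1/2)f₁f₂θ₂ = 0; (E2) ∂₁f₂ - (1/2)f₁f₂θ₁ = 0; (E3) f₁∂₂Ψ - f₂∂₁c - f₁f₂(cθ₁ + θ₂(Ψ+2)) = 0; (E4) -f₁∂₂b + f₂∂₁Ψ + f₁f₂(bθ₂ + θ₁(Ψ-2)) = 0. -/
open scoped Topology

/-- Partial derivative in the first coordinate. -/
noncomputable def pd1 (g : ℝ × ℝ → ℝ) (p : ℝ × ℝ) : ℝ := fderiv ℝ g p (1, 0)

/-- Partial derivative in the second coordinate. -/
noncomputable def pd2 (g : ℝ × ℝ → ℝ) (p : ℝ × ℝ) : ℝ := fderiv ℝ g p (0, 1)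

/-- Entrywise partial derivative in the first coordinate of a matrix-valued map. -/
noncomputable def pd1M (M : ℝ × ℝ → Matrix (Fin 5) (Fin 5) ℝ) (p : ℝ × ℝ) :
    Matrix (Fin 5) (Fin 5) ℝ := Matrix.of fun i j => pd1 (fun q => M q i j) p

/-- Entrywise partial derivative in the second coordinate of a matrix-valued map. -/
noncomputable def pd2M (M : ℝ × ℝ → Matrix (Fin 5) (Fin 5) ℝ) (p : ℝ × ℝ) :
    Matrix (Fin 5) (Fin 5) ℝ := Matrix.of fun i j => pd2 (fun q => M q i j) p

/-- b = -θ₁θ₂ + (1/f₂)∂₂θ₁ -/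
noncomputable def bfun (f₂ θ₁ θ₂ : ℝ × ℝ → ℝ) : ℝ × ℝ → ℝ :=
  fun p => -θ₁ p * θ₂ p + (1 / f₂ p) * pd2 θ₁ p

/-- c = θ₁θ₂ + (1/f₁)∂₁θ₂ -/
noncomputable def cfun (f₁ θ₁ θ₂ : ℝ × ℝ → ℝ) : ℝ × ℝ → ℝ :=
  fun p => θ₁ p * θ₂ p + (1 / f₁ p) * pd1 θ₂ p

/-- The matrix A₁. -/
noncomputable def A1 (θ₁ Ψ b : ℝ × ℝ → ℝ) (p : ℝ × ℝ) : Matrix (Fin 5) (Fin 5) ℝ :=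
  !![θ₁ p / 2, -(1 + Ψ p) / 2, b p / 2, θ₁ p / 2, 0;
     1, 0, 0, -1, (1 + Ψ p) / 2;
     0, 0, 0, 0, -(b p) / 2;
     0, 1, 0, 0, -(θ₁ p) / 2;
     0, -1, 0, 0, -(θ₁ p) / 2]

/-- The matrix A₂. -/
noncomputable def A2 (θ₂ Ψ c : ℝ × ℝ → ℝ) (p : ℝ × ℝ) : Matrix (Fin 5) (Fin 5) ℝ :=
  !![-(θ₂ p) / 2, -(c p) / 2, -(1 - Ψ p) / 2, θ₂ p / 2, 0;
     0, 0, 0, 0, c p / 2;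
     1, 0, 0, 1, (1 - Ψ p) / 2;
     0, 0, -1, 0, -(θ₂ p) / 2;
     0, 0, -1, 0, θ₂ p / 2]

/-!
`A₁` and `A₂` depend affinely on `(θ₁, Ψ, b)` and `(θ₂, Ψ, c)`, and the coefficients of `Ψ`, `b`,
`c` are multiples of two constant matrices `N₁`, `N₂`. The definitions of `b` and `c` say exactly
that `∂₂θ₁ = f₂(b + θ₁θ₂)` and `∂₁θ₂ = f₁(c - θ₁θ₂)`, and with these relations the terms of the
curvature along the coefficients of `θ₁` and `θ₂` cancel. What remains is
`-E₁ • A₁ + E₂ • A₂ + (E₃ / 2) • N₁ + (E₄ / 2) • N₂`, where `Eᵢ` is the left-hand side of the `i`-th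
scalar equation. Since `A₁`, `A₂`, `N₁`, `N₂` are linearly independent at every point, the curvature
vanishes exactly when all four `Eᵢ` do.
-/

section Derivatives

variable {𝕜 E F m n : Type*} [NontriviallyNormedField 𝕜] [NormedAddCommGroup E] [NormedSpace 𝕜 E]
  [NormedAddCommGroup F] [NormedSpace 𝕜 F]

theorem differentiableAt_fderiv_apply {g : E → F} {p : E} {k : WithTop ℕ∞}
    (hg : ContDiffAt 𝕜 k g p) (hk : 2 ≤ k) (v : E) :
    DifferentiableAt 𝕜 (fun q => fderiv 𝕜 g q v) p :=
  ((hg.fderiv_right (m := 1) (by simpa [one_add_one_eq_two] using hk)).differentiableAt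
    one_ne_zero).clm_apply (differentiableAt_const v)

theorem of_fderiv_smul_apply {f : E → 𝕜} {M : E → Matrix m n 𝕜} {p : E}
    (hf : DifferentiableAt 𝕜 f p) (hM : ∀ i j, DifferentiableAt 𝕜 (fun q => M q i j) p) (v : E) :
    Matrix.of (fun i j => fderiv 𝕜 (fun q => (f q • M q) i j) p v) =
      fderiv 𝕜 f p v • M p + f p • Matrix.of fun i j => fderiv 𝕜 (fun q => M q i j) p v := by
  ext i j
  simp [fderiv_fun_mul hf (hM i j), mul_comm, add_comm]

end Derivatives

section PartialDerivatives

variable {f θ Ψ b c : ℝ × ℝ → ℝ} {M : ℝ × ℝ → Matrix (Fin 5) (Fin 5) ℝ} {p : ℝ × ℝ}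

theorem pd1M_smul (hf : DifferentiableAt ℝ f p)
    (hM : ∀ i j, DifferentiableAt ℝ (fun q => M q i j) p) :
    pd1M (fun q => f q • M q) p = pd1 f p • M p + f p • pd1M M p :=
  of_fderiv_smul_apply hf hM (1, 0)

theorem pd2M_smul (hf : DifferentiableAt ℝ f p)
    (hM : ∀ i j, DifferentiableAt ℝ (fun q => M q i j) p) :
    pd2M (fun q => f q • M q) p = pd2 f p • M p + f p • pd2M M p :=
  of_fderiv_smul_apply hf hM (0, 1)

/-- The matrix `N₁`. It generates null rotations fixing `e₀` for the quadratic form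
`2x₀x₄ + x₁² + x₂² + x₃²`, whose Lie algebra contains `A₁` and `A₂`; up to a factor it is the
coefficient of `Ψ` in `A₁` and of `c` in `A₂`. -/
def nullRotation₁ : Matrix (Fin 5) (Fin 5) ℝ :=
  !![0, 1, 0, 0, 0;
     0, 0, 0, 0, -1;
     0, 0, 0, 0, 0;
     0, 0, 0, 0, 0;
     0, 0, 0, 0, 0]

/-- The matrix `N₂`. It generates null rotations fixing `e₀` for the same quadratic form as
`nullRotation₁`; up to a factor it is the coefficient of `b` in `A₁` and of `Ψ` in `A₂`. -/
def nullRotation₂ : Matrix (Fin 5) (Fin 5) ℝ :=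
  !![0, 0, 1, 0, 0;
     0, 0, 0, 0, 0;
     0, 0, 0, 0, -1;
     0, 0, 0, 0, 0;
     0, 0, 0, 0, 0]

/-- The coefficient of `θ₁` in the matrix `A₁`. -/
noncomputable def thetaCoeff₁ : Matrix (Fin 5) (Fin 5) ℝ :=
  !![1 / 2, 0, 0, 1 / 2, 0;
     0, 0, 0, 0, 0;
     0, 0, 0, 0, 0;
     0, 0, 0, 0, -1 / 2;
     0, 0, 0, 0, -1 / 2]

/-- The coefficient of `θ₂` in the matrix `A₂`. -/
noncomputable def thetaCoeff₂ : Matrix (Fin 5) (Fin 5) ℝ :=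
  !![-1 / 2, 0, 0, 1 / 2, 0;
     0, 0, 0, 0, 0;
     0, 0, 0, 0, 0;
     0, 0, 0, 0, -1 / 2;
     0, 0, 0, 0, 1 / 2]

theorem A1_eq_add_smul : A1 θ Ψ b = fun q =>
    A1 0 0 0 0 + θ q • thetaCoeff₁ - (Ψ q / 2) • nullRotation₁ + (b q / 2) • nullRotation₂ := by
  ext q i j
  fin_cases i <;> fin_cases j <;>
    simp [A1, thetaCoeff₁, nullRotation₁, nullRotation₂] <;> ring

theorem A2_eq_add_smul : A2 θ Ψ c = fun q =>
    A2 0 0 0 0 + θ q • thetaCoeff₂ - (c q / 2) • nullRotation₁ + (Ψ q / 2) • nullRotation₂ := by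
  ext q i j
  fin_cases i <;> fin_cases j <;>
    simp [A2, thetaCoeff₂, nullRotation₁, nullRotation₂] <;> ring

theorem differentiableAt_A1_apply (hθ : DifferentiableAt ℝ θ p) (hΨ : DifferentiableAt ℝ Ψ p)
    (hb : DifferentiableAt ℝ b p) (i j : Fin 5) :
    DifferentiableAt ℝ (fun q => A1 θ Ψ b q i j) p := by
  rw [A1_eq_add_smul]
  simp only [Matrix.add_apply, Matrix.sub_apply, Matrix.smul_apply]
  fun_prop

theorem differentiableAt_A2_apply (hθ : DifferentiableAt ℝ θ p) (hΨ : DifferentiableAt ℝ Ψ p)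
    (hc : DifferentiableAt ℝ c p) (i j : Fin 5) :
    DifferentiableAt ℝ (fun q => A2 θ Ψ c q i j) p := by
  rw [A2_eq_add_smul]
  simp only [Matrix.add_apply, Matrix.sub_apply, Matrix.smul_apply]
  fun_prop

theorem pd1M_A2 (hθ : DifferentiableAt ℝ θ p) (hΨ : DifferentiableAt ℝ Ψ p)
    (hc : DifferentiableAt ℝ c p) : pd1M (A2 θ Ψ c) p =
      pd1 θ p • thetaCoeff₂ - (pd1 c p / 2) • nullRotation₁ + (pd1 Ψ p / 2) • nullRotation₂ := by
  rw [A2_eq_add_smul]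
  ext i j
  simp (disch := fun_prop) [pd1M, pd1, div_eq_mul_inv, fderiv_fun_add, fderiv_fun_sub,
    fderiv_mul_const]
  ring

theorem pd2M_A1 (hθ : DifferentiableAt ℝ θ p) (hΨ : DifferentiableAt ℝ Ψ p)
    (hb : DifferentiableAt ℝ b p) : pd2M (A1 θ Ψ b) p =
      pd2 θ p • thetaCoeff₁ - (pd2 Ψ p / 2) • nullRotation₁ + (pd2 b p / 2) • nullRotation₂ := by
  rw [A1_eq_add_smul]
  ext i j
  simp (disch := fun_prop) [pd2M, pd2, div_eq_mul_inv, fderiv_fun_add, fderiv_fun_sub,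
    fderiv_mul_const]
  ring

end PartialDerivatives

section Algebra

variable (θ₁ θ₂ Ψ b c : ℝ × ℝ → ℝ) (p : ℝ × ℝ)

theorem A1_mul_A2_sub_A2_mul_A1 :
    A1 θ₁ Ψ b p * A2 θ₂ Ψ c p - A2 θ₂ Ψ c p * A1 θ₁ Ψ b p =
      -(θ₂ p / 2) • A1 θ₁ Ψ b p - (θ₁ p / 2) • A2 θ₂ Ψ c p
        + (b p + θ₁ p * θ₂ p) • thetaCoeff₁ - (c p - θ₁ p * θ₂ p) • thetaCoeff₂
        - ((c p * θ₁ p + θ₂ p * (Ψ p + 2)) / 2) • nullRotation₁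
        + ((b p * θ₂ p + θ₁ p * (Ψ p - 2)) / 2) • nullRotation₂ := by
  simp only [A1, neg_add_rev, A2, neg_sub, Matrix.cons_mul, Nat.succ_eq_add_one, Nat.reduceAdd,
    Matrix.vecMul_cons, Matrix.head_cons, Matrix.smul_cons, smul_eq_mul, mul_zero,
    Matrix.smul_empty, Matrix.tail_cons, mul_one, mul_neg, zero_smul, Matrix.empty_vecMul, add_zero,
    Matrix.add_cons, zero_add, Matrix.empty_add_empty, one_smul, neg_smul, Matrix.neg_cons,
    neg_zero, neg_neg, Matrix.neg_empty, Matrix.empty_mul, Equiv.symm_apply_apply,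
    Matrix.of_sub_of, Matrix.sub_cons, sub_self, Matrix.zero_empty, sub_zero, sub_neg_eq_add,
    zero_sub, Matrix.smul_of, Matrix.neg_of, thetaCoeff₁, one_div, Matrix.of_add_of, thetaCoeff₂,
    nullRotation₁, nullRotation₂, EmbeddingLike.apply_eq_iff_eq, Matrix.vecCons_inj, and_true,
    true_and]
  and_intros <;> ring

theorem linearIndependent_A1_A2_nullRotation :
    LinearIndependent ℝ ![A1 θ₁ Ψ b p, A2 θ₂ Ψ c p, nullRotation₁, nullRotation₂] := by
  rw [Fintype.linearIndependent_iff]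
  intro g hg
  have entry (i j : Fin 5) := congrFun (congrFun hg i) j
  have h₀ : g 0 = 0 := by
    simpa [Fin.sum_univ_four, A1, A2, nullRotation₁, nullRotation₂] using entry 1 0
  have h₁ : g 1 = 0 := by
    simpa [Fin.sum_univ_four, A1, A2, nullRotation₁, nullRotation₂] using entry 2 0
  have h₂ : g 2 = 0 := by
    simpa [Fin.sum_univ_four, nullRotation₁, nullRotation₂, h₀, h₁] using entry 0 1
  have h₃ : g 3 = 0 := by
    simpa [Fin.sum_univ_four, nullRotation₁, nullRotation₂, h₀, h₁] using entry 0 2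
  simp [Fin.forall_fin_succ, h₀, h₁, h₂, h₃]

end Algebra

section StructuralEquation

variable {f₁ f₂ θ₁ θ₂ Ψ b c : ℝ × ℝ → ℝ} {p : ℝ × ℝ}

theorem curvature_eq_smul_A1_add_smul_A2_add_nullRotation
    (hf₁ : DifferentiableAt ℝ f₁ p) (hf₂ : DifferentiableAt ℝ f₂ p)
    (hθ₁ : DifferentiableAt ℝ θ₁ p) (hθ₂ : DifferentiableAt ℝ θ₂ p) (hΨ : DifferentiableAt ℝ Ψ p)
    (hb : DifferentiableAt ℝ b p) (hc : DifferentiableAt ℝ c p)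
    (hθ₁b : pd2 θ₁ p = f₂ p * (b p + θ₁ p * θ₂ p))
    (hθ₂c : pd1 θ₂ p = f₁ p * (c p - θ₁ p * θ₂ p)) :
    pd1M (fun q => f₂ q • A2 θ₂ Ψ c q) p - pd2M (fun q => f₁ q • A1 θ₁ Ψ b q) p
        + (f₁ p * f₂ p) • (A1 θ₁ Ψ b p * A2 θ₂ Ψ c p - A2 θ₂ Ψ c p * A1 θ₁ Ψ b p) =
      -(pd2 f₁ p + (1 / 2) * f₁ p * f₂ p * θ₂ p) • A1 θ₁ Ψ b p
        + (pd1 f₂ p - (1 / 2) * f₁ p * f₂ p * θ₁ p) • A2 θ₂ Ψ c p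
        + ((f₁ p * pd2 Ψ p - f₂ p * pd1 c p
            - f₁ p * f₂ p * (c p * θ₁ p + θ₂ p * (Ψ p + 2))) / 2) • nullRotation₁
        + ((-(f₁ p) * pd2 b p + f₂ p * pd1 Ψ p
            + f₁ p * f₂ p * (b p * θ₂ p + θ₁ p * (Ψ p - 2))) / 2) • nullRotation₂ := by
  rw [pd1M_smul hf₂ (differentiableAt_A2_apply hθ₂ hΨ hc), pd1M_A2 hθ₂ hΨ hc, hθ₂c,
    pd2M_smul hf₁ (differentiableAt_A1_apply hθ₁ hΨ hb), pd2M_A1 hθ₁ hΨ hb, hθ₁b,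
    A1_mul_A2_sub_A2_mul_A1]
  module

theorem structural_equation_iff_four_scalar_equations_general
    (hf₁ : DifferentiableAt ℝ f₁ p) (hf₂ : DifferentiableAt ℝ f₂ p)
    (hθ₁ : DifferentiableAt ℝ θ₁ p) (hθ₂ : DifferentiableAt ℝ θ₂ p) (hΨ : DifferentiableAt ℝ Ψ p)
    (hb : DifferentiableAt ℝ b p) (hc : DifferentiableAt ℝ c p)
    (hθ₁b : pd2 θ₁ p = f₂ p * (b p + θ₁ p * θ₂ p))
    (hθ₂c : pd1 θ₂ p = f₁ p * (c p - θ₁ p * θ₂ p)) :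
    pd1M (fun q => f₂ q • A2 θ₂ Ψ c q) p - pd2M (fun q => f₁ q • A1 θ₁ Ψ b q) p
        + (f₁ p * f₂ p) • (A1 θ₁ Ψ b p * A2 θ₂ Ψ c p - A2 θ₂ Ψ c p * A1 θ₁ Ψ b p) = 0 ↔
      pd2 f₁ p + (1 / 2) * f₁ p * f₂ p * θ₂ p = 0 ∧
      pd1 f₂ p - (1 / 2) * f₁ p * f₂ p * θ₁ p = 0 ∧
      f₁ p * pd2 Ψ p - f₂ p * pd1 c p
        - f₁ p * f₂ p * (c p * θ₁ p + θ₂ p * (Ψ p + 2)) = 0 ∧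
      -(f₁ p) * pd2 b p + f₂ p * pd1 Ψ p
        + f₁ p * f₂ p * (b p * θ₂ p + θ₁ p * (Ψ p - 2)) = 0 := by
  rw [curvature_eq_smul_A1_add_smul_A2_add_nullRotation hf₁ hf₂ hθ₁ hθ₂ hΨ hb hc hθ₁b hθ₂c]
  constructor
  · intro h
    have coeff_eq_zero := Fintype.linearIndependent_iff.1
      (linearIndependent_A1_A2_nullRotation θ₁ θ₂ Ψ b c p) ![_, _, _, _]
      ((Fin.sum_univ_four _).trans h)
    exact ⟨neg_eq_zero.1 (coeff_eq_zero 0), coeff_eq_zero 1,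
      (div_eq_zero_iff.1 (coeff_eq_zero 2)).resolve_right two_ne_zero,
      (div_eq_zero_iff.1 (coeff_eq_zero 3)).resolve_right two_ne_zero⟩
  · rintro ⟨e₁, e₂, e₃, e₄⟩
    simp only [e₁, e₂, e₃, e₄, neg_zero, zero_div, zero_smul, add_zero]

theorem differentiableAt_bfun (hf₂ : DifferentiableAt ℝ f₂ p) (hθ₁ : DifferentiableAt ℝ θ₁ p)
    (hθ₂ : DifferentiableAt ℝ θ₂ p) (hdθ₁ : DifferentiableAt ℝ (pd2 θ₁) p) (hf₂0 : f₂ p ≠ 0) :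
    DifferentiableAt ℝ (bfun f₂ θ₁ θ₂) p := by
  unfold bfun
  fun_prop (disch := assumption)

theorem differentiableAt_cfun (hf₁ : DifferentiableAt ℝ f₁ p) (hθ₁ : DifferentiableAt ℝ θ₁ p)
    (hθ₂ : DifferentiableAt ℝ θ₂ p) (hdθ₂ : DifferentiableAt ℝ (pd1 θ₂) p) (hf₁0 : f₁ p ≠ 0) :
    DifferentiableAt ℝ (cfun f₁ θ₁ θ₂) p := by
  unfold cfun
  fun_prop (disch := assumption)

theorem pd2_eq_mul_bfun_add (hf₂0 : f₂ p ≠ 0) :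
    pd2 θ₁ p = f₂ p * (bfun f₂ θ₁ θ₂ p + θ₁ p * θ₂ p) := by
  simp only [bfun]
  field_simp
  ring

theorem pd1_eq_mul_cfun_sub (hf₁0 : f₁ p ≠ 0) :
    pd1 θ₂ p = f₁ p * (cfun f₁ θ₁ θ₂ p - θ₁ p * θ₂ p) := by
  simp only [cfun]
  field_simp
  ring

end StructuralEquation

/-- The structural equation `∂₁(f₂A₂) - ∂₂(f₁A₁) + f₁f₂(A₁A₂ - A₂A₁) = 0` on an open set `U`
holds if and only if the four scalar equations (E1)–(E4) hold on `U`. -/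
theorem structural_equation_iff_four_scalar_equations
    (U : Set (ℝ × ℝ)) (hU : IsOpen U)
    (f₁ f₂ θ₁ θ₂ Ψ : ℝ × ℝ → ℝ)
    (hf₁ : ContDiffOn ℝ (⊤ : ℕ∞) f₁ U) (hf₂ : ContDiffOn ℝ (⊤ : ℕ∞) f₂ U)
    (hθ₁ : ContDiffOn ℝ (⊤ : ℕ∞) θ₁ U) (hθ₂ : ContDiffOn ℝ (⊤ : ℕ∞) θ₂ U)
    (hΨ : ContDiffOn ℝ (⊤ : ℕ∞) Ψ U)
    (hf₁0 : ∀ p ∈ U, f₁ p ≠ 0) (hf₂0 : ∀ p ∈ U, f₂ p ≠ 0) :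
    (∀ p ∈ U,
        pd1M (fun q => f₂ q • A2 θ₂ Ψ (cfun f₁ θ₁ θ₂) q) p
          - pd2M (fun q => f₁ q • A1 θ₁ Ψ (bfun f₂ θ₁ θ₂) q) p
          + (f₁ p * f₂ p) •
              (A1 θ₁ Ψ (bfun f₂ θ₁ θ₂) p * A2 θ₂ Ψ (cfun f₁ θ₁ θ₂) p
                - A2 θ₂ Ψ (cfun f₁ θ₁ θ₂) p * A1 θ₁ Ψ (bfun f₂ θ₁ θ₂) p) = 0)
      ↔ (∀ p ∈ U,
          pd2 f₁ p + (1 / 2) * f₁ p * f₂ p * θ₂ p = 0 ∧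
          pd1 f₂ p - (1 / 2) * f₁ p * f₂ p * θ₁ p = 0 ∧
          f₁ p * pd2 Ψ p - f₂ p * pd1 (cfun f₁ θ₁ θ₂) p
            - f₁ p * f₂ p * (cfun f₁ θ₁ θ₂ p * θ₁ p + θ₂ p * (Ψ p + 2)) = 0 ∧
          -(f₁ p) * pd2 (bfun f₂ θ₁ θ₂) p + f₂ p * pd1 Ψ p
            + f₁ p * f₂ p * (bfun f₂ θ₁ θ₂ p * θ₂ p + θ₁ p * (Ψ p - 2)) = 0) := by
  refine forall₂_congr fun p hp => ?_
  have hUp := hU.mem_nhds hp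
  have smooth {g : ℝ × ℝ → ℝ} (hg : ContDiffOn ℝ (⊤ : ℕ∞) g U) : DifferentiableAt ℝ g p :=
    (hg.contDiffAt hUp).differentiableAt (by simp)
  have smooth_fderiv {g : ℝ × ℝ → ℝ} (hg : ContDiffOn ℝ (⊤ : ℕ∞) g U) (v : ℝ × ℝ) :
      DifferentiableAt ℝ (fun q => fderiv ℝ g q v) p :=
    differentiableAt_fderiv_apply (hg.contDiffAt hUp)
      (WithTop.coe_le_coe.2 (le_top : (2 : ℕ∞) ≤ ⊤)) v
  have hb : DifferentiableAt ℝ (bfun f₂ θ₁ θ₂) p :=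
    differentiableAt_bfun (smooth hf₂) (smooth hθ₁) (smooth hθ₂) (smooth_fderiv hθ₁ (0, 1))
      (hf₂0 p hp)
  have hc : DifferentiableAt ℝ (cfun f₁ θ₁ θ₂) p :=
    differentiableAt_cfun (smooth hf₁) (smooth hθ₁) (smooth hθ₂) (smooth_fderiv hθ₂ (1, 0))
      (hf₁0 p hp)
  exact structural_equation_iff_four_scalar_equations_general (smooth hf₁) (smooth hf₂)
    (smooth hθ₁) (smooth hθ₂) (smooth hΨ) hb hc (pd2_eq_mul_bfun_add (hf₂0 p hp))
    (pd1_eq_mul_cfun_sub (hf₁0 p hp))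
end

section
/- Let U ⊆ ℝ² be open and connected, let f₁, f₂, Ψ : U → ℝ be smooth with f₁, f₂ nowhere zero, and let θ₁, θ₂ be real constants. Set b = -θ₁θ₂ and c = θ₁θ₂ (these are the values of b = -θ₁θ₂ + ξ₂(θ₁) and c = θ₁θ₂ + ξ₁(θ₂) when θ₁, θ₂ are constant). If the structural equations (E1) ∂₂f₁ + (1/2)f₁f₂θ₂ = 0, (E2) ∂₁f₂ - (1/2)f₁f₂θ₁ = 0, (E3) f₁∂₂Ψ - f₂∂₁c - f₁f₂(cθ₁ + θ₂(Ψ+2)) = 0, (E4) -f₁∂₂b + f₂∂₁Ψ + f₁f₂(bθ₂ + θ₁(Ψ-2)) = 0 hold on U, then θ₁θ₂(θ₁² + θ₂² + 4) = 0. -/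
open scoped Topology

/-! With `θ₁`, `θ₂` constant, (E3) and (E4) prescribe both partial derivatives of `Ψ`:
`∂₁Ψ = f₁(θ₁(θ₂² + 2) - θ₁Ψ)` and `∂₂Ψ = f₂(θ₂(θ₁² + 2) + θ₂Ψ)`. By (E1) and (E2), equality of
the mixed second derivatives of `Ψ` at a point becomes `f₁f₂(θ₂a₁ + θ₁a₂) = 0` with
`a₁ = θ₁(θ₂² + 2)` and `a₂ = θ₂(θ₁² + 2)`: the terms in `Ψ` cancel. -/

section PartialDerivatives

variable {f g u v : ℝ × ℝ → ℝ} {p : ℝ × ℝ}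

theorem pd1_const (c : ℝ) (p : ℝ × ℝ) : pd1 (fun _ => c) p = 0 := by
  simp [pd1]

theorem pd2_const (c : ℝ) (p : ℝ × ℝ) : pd2 (fun _ => c) p = 0 := by
  simp [pd2]

theorem pd1_const_add_const_mul (a c : ℝ) (g : ℝ × ℝ → ℝ) (p : ℝ × ℝ) :
    pd1 (fun q => a + c * g q) p = c * pd1 g p := by
  rw [pd1, fderiv_const_add]
  exact DFunLike.congr_fun (congrFun (fderiv_const_smul_field (f := g) c) p) (1, 0)

theorem pd2_const_add_const_mul (a c : ℝ) (g : ℝ × ℝ → ℝ) (p : ℝ × ℝ) :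
    pd2 (fun q => a + c * g q) p = c * pd2 g p := by
  rw [pd2, fderiv_const_add]
  exact DFunLike.congr_fun (congrFun (fderiv_const_smul_field (f := g) c) p) (0, 1)

theorem pd1_mul (hf : DifferentiableAt ℝ f p) (hg : DifferentiableAt ℝ g p) :
    pd1 (fun q => f q * g q) p = f p * pd1 g p + g p * pd1 f p := by
  simp [pd1, fderiv_fun_mul hf hg]

theorem pd2_mul (hf : DifferentiableAt ℝ f p) (hg : DifferentiableAt ℝ g p) :
    pd2 (fun q => f q * g q) p = f p * pd2 g p + g p * pd2 f p := by
  simp [pd2, fderiv_fun_mul hf hg]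

theorem pd1_congr (h : f =ᶠ[𝓝 p] g) : pd1 f p = pd1 g p := by
  rw [pd1, h.fderiv_eq, pd1]

theorem pd2_congr (h : f =ᶠ[𝓝 p] g) : pd2 f p = pd2 g p := by
  rw [pd2, h.fderiv_eq, pd2]

theorem fderiv_eq_pd1_smul_fst_add_pd2_smul_snd (g : ℝ × ℝ → ℝ) (p : ℝ × ℝ) :
    fderiv ℝ g p =
      pd1 g p • ContinuousLinearMap.fst ℝ ℝ ℝ + pd2 g p • ContinuousLinearMap.snd ℝ ℝ ℝ := by
  ext <;> simp [pd1, pd2]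

theorem pd2_pd1_comm (hg : ∀ᶠ q in 𝓝 p, DifferentiableAt ℝ g q)
    (hg₁ : DifferentiableAt ℝ (pd1 g) p) (hg₂ : DifferentiableAt ℝ (pd2 g) p) :
    pd2 (pd1 g) p = pd1 (pd2 g) p := by
  have hg' : DifferentiableAt ℝ (fderiv ℝ g) p := by
    rw [funext (fderiv_eq_pd1_smul_fst_add_pd2_smul_snd g)]
    exact (hg₁.smul_const _).add (hg₂.smul_const _)
  have fderiv_apply (v w : ℝ × ℝ) :
      fderiv ℝ (fun q => fderiv ℝ g q v) p w = fderiv ℝ (fderiv ℝ g) p w v := by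
    simp [fderiv_clm_apply hg' (differentiableAt_const v)]
  calc pd2 (pd1 g) p = fderiv ℝ (fderiv ℝ g) p (0, 1) (1, 0) := fderiv_apply _ _
    _ = fderiv ℝ (fderiv ℝ g) p (1, 0) (0, 1) :=
      second_derivative_symmetric_of_eventually
        (hg.mono fun _ h => h.hasFDerivAt) hg'.hasFDerivAt _ _
    _ = pd1 (pd2 g) p := (fderiv_apply _ _).symm

theorem mul_pd2_add_eq_mul_pd1_add_of_pd_eq_mul {f₁ f₂ : ℝ × ℝ → ℝ}
    (hg : ∀ᶠ q in 𝓝 p, DifferentiableAt ℝ g q)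
    (hf₁ : DifferentiableAt ℝ f₁ p) (hf₂ : DifferentiableAt ℝ f₂ p)
    (hu : DifferentiableAt ℝ u p) (hv : DifferentiableAt ℝ v p)
    (hg₁ : pd1 g =ᶠ[𝓝 p] fun q => f₁ q * u q) (hg₂ : pd2 g =ᶠ[𝓝 p] fun q => f₂ q * v q) :
    f₁ p * pd2 u p + u p * pd2 f₁ p = f₂ p * pd1 v p + v p * pd1 f₂ p := by
  rw [← pd2_mul hf₁ hu, ← pd1_mul hf₂ hv, ← pd2_congr hg₁, ← pd1_congr hg₂]
  exact pd2_pd1_comm hg ((hf₁.mul hu).congr_of_eventuallyEq hg₁)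
    ((hf₂.mul hv).congr_of_eventuallyEq hg₂)

end PartialDerivatives

section StructuralEquations

variable {f₁ f₂ Ψ : ℝ × ℝ → ℝ} {θ₁ θ₂ : ℝ} {p : ℝ × ℝ}

theorem mul_add_mul_eq_zero_of_pd_eq_mul_affine {a₁ a₂ : ℝ}
    (hf₁ : DifferentiableAt ℝ f₁ p) (hf₂ : DifferentiableAt ℝ f₂ p)
    (hΨ : ∀ᶠ q in 𝓝 p, DifferentiableAt ℝ Ψ q) (hf₁0 : f₁ p ≠ 0) (hf₂0 : f₂ p ≠ 0)
    (hE1 : pd2 f₁ p + (1 / 2) * f₁ p * f₂ p * θ₂ = 0)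
    (hE2 : pd1 f₂ p - (1 / 2) * f₁ p * f₂ p * θ₁ = 0)
    (hΨ₁ : pd1 Ψ =ᶠ[𝓝 p] fun q => f₁ q * (a₁ + -θ₁ * Ψ q))
    (hΨ₂ : pd2 Ψ =ᶠ[𝓝 p] fun q => f₂ q * (a₂ + θ₂ * Ψ q)) :
    θ₂ * a₁ + θ₁ * a₂ = 0 := by
  have affine_differentiableAt (a c : ℝ) : DifferentiableAt ℝ (fun q => a + c * Ψ q) p :=
    (hΨ.self_of_nhds.const_mul c).const_add a
  have mixed := mul_pd2_add_eq_mul_pd1_add_of_pd_eq_mul hΨ hf₁ hf₂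
    (affine_differentiableAt a₁ (-θ₁)) (affine_differentiableAt a₂ θ₂) hΨ₁ hΨ₂
  rw [pd2_const_add_const_mul, pd1_const_add_const_mul, hΨ₁.self_of_nhds, hΨ₂.self_of_nhds]
    at mixed
  apply mul_left_cancel₀ (mul_ne_zero hf₁0 hf₂0)
  linear_combination (-2 / 3) * mixed + (2 / 3) * (a₁ - θ₁ * Ψ p) * hE1
    - (2 / 3) * (a₂ + θ₂ * Ψ p) * hE2

theorem constant_thetas_relation_general
    (hf₁ : DifferentiableAt ℝ f₁ p) (hf₂ : DifferentiableAt ℝ f₂ p)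
    (hΨ : ∀ᶠ q in 𝓝 p, DifferentiableAt ℝ Ψ q) (hf₁0 : f₁ p ≠ 0) (hf₂0 : f₂ p ≠ 0)
    (hE1 : pd2 f₁ p + (1 / 2) * f₁ p * f₂ p * θ₂ = 0)
    (hE2 : pd1 f₂ p - (1 / 2) * f₁ p * f₂ p * θ₁ = 0)
    (hE3 : ∀ᶠ q in 𝓝 p, f₁ q * pd2 Ψ q - f₂ q * pd1 (fun _ => θ₁ * θ₂) q
      - f₁ q * f₂ q * ((θ₁ * θ₂) * θ₁ + θ₂ * (Ψ q + 2)) = 0)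
    (hE4 : ∀ᶠ q in 𝓝 p, -(f₁ q) * pd2 (fun _ => -θ₁ * θ₂) q + f₂ q * pd1 Ψ q
      + f₁ q * f₂ q * ((-θ₁ * θ₂) * θ₂ + θ₁ * (Ψ q - 2)) = 0) :
    θ₁ * θ₂ * (θ₁ ^ 2 + θ₂ ^ 2 + 4) = 0 := by
  have hΨ₁ : pd1 Ψ =ᶠ[𝓝 p] fun q => f₁ q * (θ₁ * (θ₂ ^ 2 + 2) + -θ₁ * Ψ q) := by
    filter_upwards [hE4, hf₂.continuousAt.eventually_ne hf₂0] with q hq hq0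
    rw [pd2_const] at hq
    apply mul_left_cancel₀ hq0
    linear_combination hq
  have hΨ₂ : pd2 Ψ =ᶠ[𝓝 p] fun q => f₂ q * (θ₂ * (θ₁ ^ 2 + 2) + θ₂ * Ψ q) := by
    filter_upwards [hE3, hf₁.continuousAt.eventually_ne hf₁0] with q hq hq0
    rw [pd1_const] at hq
    apply mul_left_cancel₀ hq0
    linear_combination hq
  linear_combination
    mul_add_mul_eq_zero_of_pd_eq_mul_affine hf₁ hf₂ hΨ hf₁0 hf₂0 hE1 hE2 hΨ₁ hΨ₂

end StructuralEquations

/-- If the conformal principal curvatures θ₁, θ₂ are constant and the structural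
equations (E1)–(E4) (with b = -θ₁θ₂ and c = θ₁θ₂) hold on a connected open set, then
θ₁θ₂(θ₁² + θ₂² + 4) = 0. -/
theorem constant_thetas_relation
    (U : Set (ℝ × ℝ)) (hU : IsOpen U) (hUconn : IsConnected U)
    (f₁ f₂ Ψ : ℝ × ℝ → ℝ) (θ₁ θ₂ : ℝ)
    (hf₁ : ContDiffOn ℝ (⊤ : ℕ∞) f₁ U) (hf₂ : ContDiffOn ℝ (⊤ : ℕ∞) f₂ U)
    (hΨ : ContDiffOn ℝ (⊤ : ℕ∞) Ψ U)
    (hf₁0 : ∀ p ∈ U, f₁ p ≠ 0) (hf₂0 : ∀ p ∈ U, f₂ p ≠ 0)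
    (hE1 : ∀ p ∈ U, pd2 f₁ p + (1 / 2) * f₁ p * f₂ p * θ₂ = 0)
    (hE2 : ∀ p ∈ U, pd1 f₂ p - (1 / 2) * f₁ p * f₂ p * θ₁ = 0)
    (hE3 : ∀ p ∈ U, f₁ p * pd2 Ψ p - f₂ p * pd1 (fun _ => θ₁ * θ₂) p
      - f₁ p * f₂ p * ((θ₁ * θ₂) * θ₁ + θ₂ * (Ψ p + 2)) = 0)
    (hE4 : ∀ p ∈ U, -(f₁ p) * pd2 (fun _ => -θ₁ * θ₂) p + f₂ p * pd1 Ψ p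
      + f₁ p * f₂ p * ((-θ₁ * θ₂) * θ₂ + θ₁ * (Ψ p - 2)) = 0) :
    θ₁ * θ₂ * (θ₁ ^ 2 + θ₂ ^ 2 + 4) = 0 := by
  obtain ⟨p, hp⟩ := hUconn.nonempty
  have hUp : ∀ᶠ q in 𝓝 p, q ∈ U := hU.mem_nhds hp
  have differentiableAt_of_mem {g : ℝ × ℝ → ℝ} (hg : ContDiffOn ℝ (⊤ : ℕ∞) g U) :
      ∀ q ∈ U, DifferentiableAt ℝ g q := fun q hq =>
    (hg.contDiffAt (hU.mem_nhds hq)).differentiableAt (by simp)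
  exact constant_thetas_relation_general (differentiableAt_of_mem hf₁ p hp)
    (differentiableAt_of_mem hf₂ p hp) (hUp.mono (differentiableAt_of_mem hΨ))
    (hf₁0 p hp) (hf₂0 p hp) (hE1 p hp) (hE2 p hp) (hUp.mono hE3) (hUp.mono hE4)
end

section
/- Let θ₁, θ₂, Ψ, a, b, c, d, Ψ_C be real numbers with θ₂ ≠ 0. Let F, G : ℝ² → ℝ be C⁵ functions whose degree-4 Taylor polynomials at the origin are, respectively, P(x,y) = (1/2)(x² - y²) + (1/6)(θ₁x³ + θ₂y³) + (1/24)(ax⁴ + 4bx³y + 6Ψx²y² + 4cxy³ + dy⁴) and Q(x,y) = (1/2)(x² - y²) + (1/8)(x⁴ - y⁴) + (1/6)Ψ_C x²y². Then for a real number t, the function x ↦ F(x, tx) - G(x, tx) is O(x⁴) as x → 0 (i.e., the surface and the cyclide are tangent of order 3 along the line y = tx) if and only if θ₁ + θ₂t³ = 0; consequently there is exactly one such direction, namely t = -(θ₁/θ₂)^{1/3} (the unique real cube root). -/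
open Asymptotics Filter
open scoped Topology

/-- Degree-4 Taylor polynomial of a surface in standard position at a non-umbilical point. -/
noncomputable def surfP (θ₁ θ₂ Ψ a b c d : ℝ) (x y : ℝ) : ℝ :=
  (1 / 2) * (x ^ 2 - y ^ 2) + (1 / 6) * (θ₁ * x ^ 3 + θ₂ * y ^ 3)
    + (1 / 24) * (a * x ^ 4 + 4 * b * x ^ 3 * y + 6 * Ψ * x ^ 2 * y ^ 2
        + 4 * c * x * y ^ 3 + d * y ^ 4)

/-- Degree-4 Taylor polynomial of a Dupin cyclide in standard position. -/
noncomputable def cyclQ (Ψc : ℝ) (x y : ℝ) : ℝ :=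
  (1 / 2) * (x ^ 2 - y ^ 2) + (1 / 8) * (x ^ 4 - y ^ 4) + (1 / 6) * Ψc * x ^ 2 * y ^ 2

/-!
Subtracting the two Taylor expansions, the quadratic parts cancel and `F - G` is the cubic form
`(θ₁ * x ^ 3 + θ₂ * y ^ 3) / 6` up to `O(‖p‖ ^ 4)`. On the line spanned by `(1, t)` a form of
degree three is its value at `(1, t)` times `x ^ 3`, which is `O(x ^ 4)` only when that value
vanishes.
-/

lemma isBigO_pow_along_line {𝕜 E E' : Type*} [NormedField 𝕜] [NormedAddCommGroup E]
    [NormedSpace 𝕜 E] [NormedAddCommGroup E'] {n : ℕ} {f : E → E'}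
    (hf : f =O[𝓝 0] fun p => ‖p‖ ^ n) (v : E) :
    (fun x : 𝕜 => f (x • v)) =O[𝓝 0] fun x => x ^ n := by
  have hline : Tendsto (fun x : 𝕜 => x • v) (𝓝 0) (𝓝 0) :=
    (continuous_id.smul (continuous_const (y := v))).tendsto' 0 0 (zero_smul 𝕜 v)
  have hnorm : (fun x : 𝕜 => ‖x • v‖) =O[𝓝 0] fun x => x :=
    isBigO_of_le' (c := ‖v‖) _ fun x => by rw [norm_norm, norm_smul, mul_comm]
  exact (hf.comp_tendsto hline).trans (hnorm.pow n)

section Homogeneous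

variable {𝕜 E E' : Type*} [NontriviallyNormedField 𝕜] [NormedAddCommGroup E] [NormedSpace 𝕜 E]
  [NormedAddCommGroup E'] [NormedSpace 𝕜 E'] {m n : ℕ}

lemma pow_smul_const_isBigO_pow_iff (hmn : m < n) {w : E'} :
    ((fun x : 𝕜 => x ^ m • w) =O[𝓝 0] fun x => x ^ n) ↔ w = 0 := by
  refine ⟨fun h => ?_, fun hw => by simpa only [hw, smul_zero] using isBigO_zero _ _⟩
  by_contra hw
  have hself : (fun x : 𝕜 => x ^ m • w) =o[𝓝 0] fun x => x ^ m • w :=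
    (h.trans_isLittleO (isLittleO_pow_pow hmn)).trans_isBigO <|
      isBigO_of_le' (c := ‖w‖⁻¹) _ fun x => by
        rw [norm_smul, mul_comm ‖x ^ m‖, inv_mul_cancel_left₀ (norm_ne_zero_iff.2 hw)]
  have hne : ∃ᶠ x : 𝕜 in 𝓝 0, x ≠ 0 :=
    (eventually_mem_nhdsWithin (s := {0}ᶜ)).frequently.filter_mono nhdsWithin_le_nhds
  exact isLittleO_irrefl (hne.mono fun x hx => smul_ne_zero (pow_ne_zero m hx) hw) hself

lemma isBigO_pow_along_line_iff_of_homogeneous (hmn : m < n) {f P : E → E'}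
    (hP : ∀ (x : 𝕜) (v : E), P (x • v) = x ^ m • P v)
    (hfP : (fun p => f p - P p) =O[𝓝 0] fun p => ‖p‖ ^ n) (v : E) :
    ((fun x : 𝕜 => f (x • v)) =O[𝓝 0] fun x => x ^ n) ↔ P v = 0 := by
  have hrem : (fun x : 𝕜 => f (x • v) - x ^ m • P v) =O[𝓝 0] fun x => x ^ n := by
    simpa only [hP] using isBigO_pow_along_line (𝕜 := 𝕜) hfP v
  rw [← pow_smul_const_isBigO_pow_iff (𝕜 := 𝕜) hmn]
  exact ⟨fun h => (h.sub hrem).congr_left fun x => sub_sub_cancel _ _,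
    fun h => (hrem.add h).congr_left fun x => sub_add_cancel _ _⟩

end Homogeneous

lemma pow_bijective_of_odd {n : ℕ} (hn : Odd n) : Function.Bijective fun t : ℝ => t ^ n := by
  have htop : Tendsto (fun t : ℝ => t ^ n) atTop atTop := tendsto_pow_atTop hn.pos.ne'
  have hbot : Tendsto (fun t : ℝ => t ^ n) atBot atBot := by
    simpa only [Function.comp_def, hn.neg_pow, neg_neg] using
      tendsto_neg_atTop_atBot.comp (htop.comp tendsto_neg_atBot_atTop)
  exact ⟨hn.pow_injective, (continuous_pow n).surjective htop hbot⟩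

lemma fst_pow_mul_snd_pow_isBigO {R : Type*} [NormedRing R] [NormOneClass R]
    (l : Filter (R × R)) (i j : ℕ) :
    (fun p : R × R => p.1 ^ i * p.2 ^ j) =O[l] fun p => ‖p‖ ^ (i + j) := by
  simpa only [pow_add] using
    (isBigO_fst_prod'.norm_right.pow i).mul (isBigO_snd_prod'.norm_right.pow j)

lemma surfP_sub_cyclQ_sub_cubic_isBigO (θ₁ θ₂ Ψ a b c d Ψc : ℝ) (l : Filter (ℝ × ℝ)) :
    (fun p : ℝ × ℝ => surfP θ₁ θ₂ Ψ a b c d p.1 p.2 - cyclQ Ψc p.1 p.2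
      - (θ₁ * p.1 ^ 3 + θ₂ * p.2 ^ 3) / 6) =O[l] fun p => ‖p‖ ^ 4 := by
  have monomial := fst_pow_mul_snd_pow_isBigO l
  refine ((monomial 4 0).const_mul_left (a / 24 - 1 / 8)
    |>.add ((monomial 3 1).const_mul_left (b / 6))
    |>.add ((monomial 2 2).const_mul_left (Ψ / 4 - Ψc / 6))
    |>.add ((monomial 1 3).const_mul_left (c / 6))
    |>.add ((monomial 0 4).const_mul_left (d / 24 + 1 / 8))).congr_left fun p => ?_
  simp only [surfP, cyclQ]
  ring

lemma isBigO_along_slope_iff_cubic_eq_zero {θ₁ θ₂ : ℝ} {f : ℝ × ℝ → ℝ}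
    (hf : (fun p : ℝ × ℝ => f p - (θ₁ * p.1 ^ 3 + θ₂ * p.2 ^ 3) / 6)
      =O[𝓝 (0 : ℝ × ℝ)] fun p => ‖p‖ ^ 4) (t : ℝ) :
    ((fun x : ℝ => f (x, t * x)) =O[𝓝 (0 : ℝ)] fun x => x ^ 4) ↔ θ₁ + θ₂ * t ^ 3 = 0 := by
  have hcubic (x : ℝ) (v : ℝ × ℝ) : (θ₁ * (x • v).1 ^ 3 + θ₂ * (x • v).2 ^ 3) / 6
      = x ^ 3 • ((θ₁ * v.1 ^ 3 + θ₂ * v.2 ^ 3) / 6) := by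
    simp only [Prod.smul_fst, Prod.smul_snd, smul_eq_mul]
    ring
  simpa [mul_comm] using
    isBigO_pow_along_line_iff_of_homogeneous (by norm_num) hcubic hf ((1 : ℝ), t)

theorem order_three_tangency_direction_general {θ₁ θ₂ : ℝ} (hθ₂ : θ₂ ≠ 0) {F G : ℝ × ℝ → ℝ}
    (hFG : (fun p : ℝ × ℝ => F p - G p - (θ₁ * p.1 ^ 3 + θ₂ * p.2 ^ 3) / 6)
      =O[𝓝 (0 : ℝ × ℝ)] fun p => ‖p‖ ^ 4) :
    (∀ t : ℝ,
        ((fun x : ℝ => F (x, t * x) - G (x, t * x)) =O[𝓝 (0 : ℝ)] fun x => x ^ 4)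
          ↔ θ₁ + θ₂ * t ^ 3 = 0) ∧
    (∃! t : ℝ,
        (fun x : ℝ => F (x, t * x) - G (x, t * x)) =O[𝓝 (0 : ℝ)] fun x => x ^ 4) ∧
    (∀ t : ℝ,
        ((fun x : ℝ => F (x, t * x) - G (x, t * x)) =O[𝓝 (0 : ℝ)] fun x => x ^ 4)
          → t ^ 3 = -(θ₁ / θ₂)) := by
  have htangent := isBigO_along_slope_iff_cubic_eq_zero hFG
  have hcube (t : ℝ) : θ₁ + θ₂ * t ^ 3 = 0 ↔ t ^ 3 = -(θ₁ / θ₂) := by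
    rw [← neg_div, eq_div_iff hθ₂, mul_comm, add_comm, add_eq_zero_iff_eq_neg]
  refine ⟨htangent, ?_, fun t ht => (hcube t).1 ((htangent t).1 ht)⟩
  simp only [htangent, hcube]
  exact (pow_bijective_of_odd (by decide)).existsUnique _

/-- A surface and a cyclide in standard position are tangent of order 3 along the
line y = tx if and only if θ₁ + θ₂t³ = 0; there is exactly one such direction,
namely the one with t³ = -θ₁/θ₂. -/
theorem order_three_tangency_direction
    (θ₁ θ₂ Ψ a b c d Ψc : ℝ) (hθ₂ : θ₂ ≠ 0)
    (F G : ℝ × ℝ → ℝ) (hF : ContDiff ℝ 5 F) (hG : ContDiff ℝ 5 G)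
    (hFP : (fun p : ℝ × ℝ => F p - surfP θ₁ θ₂ Ψ a b c d p.1 p.2)
      =O[𝓝 (0 : ℝ × ℝ)] fun p => ‖p‖ ^ 5)
    (hGQ : (fun p : ℝ × ℝ => G p - cyclQ Ψc p.1 p.2)
      =O[𝓝 (0 : ℝ × ℝ)] fun p => ‖p‖ ^ 5) :
    (∀ t : ℝ,
        ((fun x : ℝ => F (x, t * x) - G (x, t * x)) =O[𝓝 (0 : ℝ)] fun x => x ^ 4)
          ↔ θ₁ + θ₂ * t ^ 3 = 0) ∧
    (∃! t : ℝ,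
        (fun x : ℝ => F (x, t * x) - G (x, t * x)) =O[𝓝 (0 : ℝ)] fun x => x ^ 4) ∧
    (∀ t : ℝ,
        ((fun x : ℝ => F (x, t * x) - G (x, t * x)) =O[𝓝 (0 : ℝ)] fun x => x ^ 4)
          → t ^ 3 = -(θ₁ / θ₂)) :=
  order_three_tangency_direction_general hθ₂ <|
    ((hFP.sub hGQ).trans (isLittleO_norm_pow_norm_pow (by norm_num)).isBigO
      |>.add (surfP_sub_cyclQ_sub_cubic_isBigO θ₁ θ₂ Ψ a b c d Ψc _)).congr_left fun p => by ring
end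

section
/- Let θ₁, θ₂, Ψ, a, b, c, d be real numbers with θ₁ ≠ 0 and θ₂ ≠ 0, and let t be the unique real number with θ₁ + θ₂t³ = 0 (so t ≠ 0). Let F : ℝ² → ℝ be a C⁵ function whose degree-4 Taylor polynomial at the origin is P(x,y) = (1/2)(x² - y²) + (1/6)(θ₁x³ + θ₂y³) + (1/24)(ax⁴ + 4bx³y + 6Ψx²y² + 4cxy³ + dy⁴). Then there exists exactly one real number Ψ_C such that for every C⁵ function G : ℝ² → ℝ whose degree-4 Taylor polynomial at the origin is Q(x,y) = (1/2)(x² - y²) + (1/8)(x⁴ - y⁴) + (1/6)Ψ_C x²y², the function x ↦ F(x, tx) - G(x, tx) is o(x⁴) as x → 0 (tangency of order 4 along the line y = tx); this Ψ_C is the unique solution of (1/24)(a + 4bt + 6Ψt² + 4ct³ + dt⁴) = (1/8)(1 - t⁴) + (1/6)Ψ_C t². -/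
open Asymptotics Filter
open scoped Topology

/-! Restricted to the line `y = t * x`, the quadratic parts of the two surfaces coincide and the
cubic part of `surfP` is a multiple of `θ₁ + θ₂ * t ^ 3`, so it vanishes. The difference of heights
is therefore a constant times `x ^ 4`, up to `o(x ^ 4)`, and order-4 tangency says exactly that
this constant is zero. As an equation for `Ψc` it is linear with leading coefficient
`t ^ 2 / 6 ≠ 0`. -/

section

variable {𝕜 E E' : Type*}

lemma isLittleO_comp_smul_of_norm_pow [NormedField 𝕜] [SeminormedAddCommGroup E]
    [NormedSpace 𝕜 E] [Norm E'] {f : E → E'} {n : ℕ}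
    (hf : f =o[𝓝 0] fun p => ‖p‖ ^ n) (v : E) :
    (fun x : 𝕜 => f (x • v)) =o[𝓝 0] fun x => x ^ n := by
  have hline : Tendsto (fun x : 𝕜 => x • v) (𝓝 0) (𝓝 0) :=
    (continuous_id.smul continuous_const).tendsto' 0 0 (zero_smul 𝕜 v)
  have hnorm : (fun x : 𝕜 => ‖x • v‖) =O[𝓝 0] fun x => x :=
    .of_bound ‖v‖ <| .of_forall fun x => by rw [norm_norm, norm_smul, mul_comm]
  exact (hf.comp_tendsto hline).trans_isBigO (hnorm.pow n)

lemma isLittleO_restrict_line [NormedField 𝕜] [Norm E'] {f : 𝕜 × 𝕜 → E'} {n : ℕ}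
    (hf : f =o[𝓝 0] fun p => ‖p‖ ^ n) (t : 𝕜) :
    (fun x => f (x, t * x)) =o[𝓝 0] fun x => x ^ n := by
  simpa only [Prod.smul_mk, smul_eq_mul, mul_one, mul_comm t] using
    isLittleO_comp_smul_of_norm_pow (𝕜 := 𝕜) hf (1, t)

lemma const_mul_isLittleO_self_iff {α : Type*} [NormedDivisionRing 𝕜] {l : Filter α} {f : α → 𝕜}
    (hf : ∃ᶠ x in l, f x ≠ 0) {k : 𝕜} : (fun x => k * f x) =o[l] f ↔ k = 0 := by
  refine ⟨fun h => by_contra fun hk => ?_, fun hk => by simp [hk]⟩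
  exact isLittleO_irrefl hf ((isLittleO_const_mul_left_iff hk).1 h)

lemma const_mul_pow_isLittleO_pow_iff [NontriviallyNormedField 𝕜] {k : 𝕜} {n : ℕ} :
    (fun x : 𝕜 => k * x ^ n) =o[𝓝 0] (fun x => x ^ n) ↔ k = 0 := by
  have hne : ∀ᶠ x in 𝓝[≠] (0 : 𝕜), x ^ n ≠ 0 :=
    eventually_mem_nhdsWithin.mono fun x hx => pow_ne_zero n hx
  exact const_mul_isLittleO_self_iff (hne.frequently.filter_mono nhdsWithin_le_nhds)

end

lemma contDiff_cyclQ {n : WithTop ℕ∞} (Ψc : ℝ) :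
    ContDiff ℝ n fun p : ℝ × ℝ => cyclQ Ψc p.1 p.2 := by
  unfold cyclQ
  fun_prop

lemma surfP_line {θ₁ θ₂ t : ℝ} (ht : θ₁ + θ₂ * t ^ 3 = 0) (Ψ a b c d x : ℝ) :
    surfP θ₁ θ₂ Ψ a b c d x (t * x) = (1 / 2) * (1 - t ^ 2) * x ^ 2
      + (1 / 24) * (a + 4 * b * t + 6 * Ψ * t ^ 2 + 4 * c * t ^ 3 + d * t ^ 4) * x ^ 4 := by
  unfold surfP
  linear_combination (1 / 6) * x ^ 3 * ht

lemma cyclQ_line (Ψc t x : ℝ) :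
    cyclQ Ψc x (t * x) = (1 / 2) * (1 - t ^ 2) * x ^ 2
      + ((1 / 8) * (1 - t ^ 4) + (1 / 6) * Ψc * t ^ 2) * x ^ 4 := by
  unfold cyclQ
  ring

/-- Order-4 tangency, along the line `y = t * x`, of the graph of `F` with the Dupin cyclides of
invariant `Ψc`. A cyclide enters only through its degree-4 Taylor polynomial: it is encoded as a
`C^n` function equal to `cyclQ Ψc` up to `O(‖p‖ ^ 5)`, and every such function must be tangent. -/
def IsOsculatingCyclide (n : WithTop ℕ∞) (F : ℝ × ℝ → ℝ) (t Ψc : ℝ) : Prop :=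
  ∀ G : ℝ × ℝ → ℝ, ContDiff ℝ n G →
    ((fun p : ℝ × ℝ => G p - cyclQ Ψc p.1 p.2) =O[𝓝 (0 : ℝ × ℝ)] fun p => ‖p‖ ^ 5) →
    (fun x : ℝ => F (x, t * x) - G (x, t * x)) =o[𝓝 (0 : ℝ)] fun x => x ^ 4

namespace IsOsculatingCyclide

variable {n : WithTop ℕ∞} {F : ℝ × ℝ → ℝ} {t Ψc : ℝ}

lemma iff_sub_cyclQ_isLittleO :
    IsOsculatingCyclide n F t Ψc ↔
      (fun x : ℝ => F (x, t * x) - cyclQ Ψc x (t * x)) =o[𝓝 0] fun x => x ^ 4 := by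
  refine ⟨fun h => h _ (contDiff_cyclQ Ψc) (by simpa using isBigO_zero _ _), fun h G _ hG => ?_⟩
  have hrem : (fun p : ℝ × ℝ => G p - cyclQ Ψc p.1 p.2) =o[𝓝 0] fun p => ‖p‖ ^ 4 :=
    hG.trans_isLittleO (isLittleO_norm_pow_norm_pow (by norm_num))
  exact (h.sub (isLittleO_restrict_line hrem t)).congr_left fun x => by ring

lemma iff_quartic_eq {θ₁ θ₂ Ψ a b c d : ℝ} (ht : θ₁ + θ₂ * t ^ 3 = 0)
    (hFP : (fun p : ℝ × ℝ => F p - surfP θ₁ θ₂ Ψ a b c d p.1 p.2)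
      =o[𝓝 (0 : ℝ × ℝ)] fun p => ‖p‖ ^ 4) :
    IsOsculatingCyclide n F t Ψc ↔
      (1 / 24) * (a + 4 * b * t + 6 * Ψ * t ^ 2 + 4 * c * t ^ 3 + d * t ^ 4)
        = (1 / 8) * (1 - t ^ 4) + (1 / 6) * Ψc * t ^ 2 := by
  have hrem : (fun x : ℝ => (F (x, t * x) - cyclQ Ψc x (t * x))
      - (surfP θ₁ θ₂ Ψ a b c d x (t * x) - cyclQ Ψc x (t * x))) =o[𝓝 0] fun x => x ^ 4 := by
    simpa using isLittleO_restrict_line hFP t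
  rw [iff_sub_cyclQ_isLittleO, hrem.congr_of_sub, ← sub_eq_zero,
    ← const_mul_pow_isLittleO_pow_iff (n := 4)]
  simp only [surfP_line ht, cyclQ_line, add_sub_add_left_eq_sub, sub_mul]

end IsOsculatingCyclide

theorem unique_osculating_cyclide_general {n : WithTop ℕ∞} {θ₁ θ₂ Ψ a b c d t : ℝ} (ht₀ : t ≠ 0)
    (ht : θ₁ + θ₂ * t ^ 3 = 0) {F : ℝ × ℝ → ℝ}
    (hFP : (fun p : ℝ × ℝ => F p - surfP θ₁ θ₂ Ψ a b c d p.1 p.2)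
      =o[𝓝 (0 : ℝ × ℝ)] fun p => ‖p‖ ^ 4) :
    (∃! Ψc : ℝ, IsOsculatingCyclide n F t Ψc) ∧
      ∀ Ψc : ℝ, IsOsculatingCyclide n F t Ψc ↔
        (1 / 24) * (a + 4 * b * t + 6 * Ψ * t ^ 2 + 4 * c * t ^ 3 + d * t ^ 4)
          = (1 / 8) * (1 - t ^ 4) + (1 / 6) * Ψc * t ^ 2 := by
  have hiff (Ψc : ℝ) := IsOsculatingCyclide.iff_quartic_eq (n := n) (Ψc := Ψc) ht hFP
  refine ⟨?_, hiff⟩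
  simp only [hiff]
  refine ⟨6 * ((1 / 24) * (a + 4 * b * t + 6 * Ψ * t ^ 2 + 4 * c * t ^ 3 + d * t ^ 4)
    - (1 / 8) * (1 - t ^ 4)) / t ^ 2, ?_, fun Ψc h => ?_⟩
  · field_simp
    ring
  · rw [eq_div_iff (pow_ne_zero 2 ht₀)]
    linear_combination -6 * h

/-- At a non-canal point there is exactly one osculating cyclide: exactly one value of
Ψ_C for which the cyclide is tangent of order 4 to the surface along the direction
y = tx with θ₁ + θ₂t³ = 0, and this Ψ_C solves
(1/24)(a + 4bt + 6Ψt² + 4ct³ + dt⁴) = (1/8)(1 - t⁴) + (1/6)Ψ_C t². -/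
theorem unique_osculating_cyclide
    (θ₁ θ₂ Ψ a b c d : ℝ) (hθ₁ : θ₁ ≠ 0) (hθ₂ : θ₂ ≠ 0)
    (t : ℝ) (ht : θ₁ + θ₂ * t ^ 3 = 0)
    (F : ℝ × ℝ → ℝ) (hF : ContDiff ℝ 5 F)
    (hFP : (fun p : ℝ × ℝ => F p - surfP θ₁ θ₂ Ψ a b c d p.1 p.2)
      =O[𝓝 (0 : ℝ × ℝ)] fun p => ‖p‖ ^ 5) :
    (∃! Ψc : ℝ, ∀ G : ℝ × ℝ → ℝ, ContDiff ℝ 5 G →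
        ((fun p : ℝ × ℝ => G p - cyclQ Ψc p.1 p.2) =O[𝓝 (0 : ℝ × ℝ)] fun p => ‖p‖ ^ 5) →
        (fun x : ℝ => F (x, t * x) - G (x, t * x)) =o[𝓝 (0 : ℝ)] fun x => x ^ 4) ∧
    (∀ Ψc : ℝ,
        (∀ G : ℝ × ℝ → ℝ, ContDiff ℝ 5 G →
          ((fun p : ℝ × ℝ => G p - cyclQ Ψc p.1 p.2) =O[𝓝 (0 : ℝ × ℝ)] fun p => ‖p‖ ^ 5) →
          (fun x : ℝ => F (x, t * x) - G (x, t * x)) =o[𝓝 (0 : ℝ)] fun x => x ^ 4) →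
        (1 / 24) * (a + 4 * b * t + 6 * Ψ * t ^ 2 + 4 * c * t ^ 3 + d * t ^ 4)
          = (1 / 8) * (1 - t ^ 4) + (1 / 6) * Ψc * t ^ 2) := by
  have ht₀ : t ≠ 0 := by rintro rfl; exact hθ₁ (by simpa using ht)
  exact (unique_osculating_cyclide_general ht₀ ht <| hFP.trans_isLittleO <|
    isLittleO_norm_pow_norm_pow (by norm_num)).imp_right fun h Ψc => (h Ψc).1
end

section
/- Let θ₁, θ₂ : ℝ → ℝ be continuously differentiable and let α : ℝ → ℝ be twice continuously differentiable, and suppose that on a neighborhood of σ₀ ∈ ℝ the Darboux-line equation 12·sin(α(σ))·cos(α(σ))·α'(σ) = θ₁(σ)·cos³(α(σ)) + θ₂(σ)·sin³(α(σ)) holds, with sin(α(σ₀))·cos(α(σ₀)) ≠ 0. Then: (i) α'(σ₀) = 0 if and only if θ₁(σ₀)cos³(α(σ₀)) + θ₂(σ₀)sin³(α(σ₀)) = 0, i.e. (when θ₂(σ₀) ≠ 0) if and only if tan³(α(σ₀)) = -θ₁(σ₀)/θ₂(σ₀); (ii) if moreover α'(σ₀) = 0 and the derivative of σ ↦ θ₁(σ)cos³(α(σ))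 + θ₂(σ)sin³(α(σ)) at σ₀ is nonzero, then α attains a strict local extremum at σ₀. -/
open Real Filter
open scoped Topology

/-!
Where the coefficient `12 sin α cos α` is nonzero, the Darboux equation can be divided by it, so
`α'` vanishes exactly where `F = θ₁ cos³α + θ₂ sin³α` does. Differentiating the quotient at a zero
of `F` gives `α'' = F' / (12 sin α cos α)`, and the strict second-derivative test applies.
-/

section SecondDerivativeTest

variable {f : ℝ → ℝ} {a : ℝ}

theorem eventually_nhdsGT_lt_of_deriv_pos (hf : ContinuousWithinAt f (Set.Ici a) a)
    (hderiv : ∀ᶠ x in 𝓝[>] a, 0 < deriv f x) : ∀ᶠ x in 𝓝[>] a, f a < f x := by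
  obtain ⟨b, hab, hpos⟩ := mem_nhdsGT_iff_exists_Ioo_subset.mp hderiv
  have hcont : ContinuousOn f (Set.Ico a b) := by
    rintro x ⟨hax, hxb⟩
    rcases hax.eq_or_lt with rfl | hlt
    · exact hf.mono Set.Ico_subset_Ici_self
    · exact (differentiableAt_of_deriv_ne_zero
        (hpos ⟨hlt, hxb⟩).ne').continuousAt.continuousWithinAt
  have hmono : StrictMonoOn f (Set.Ico a b) :=
    strictMonoOn_of_deriv_pos (convex_Ico a b) hcont fun x hx => hpos (interior_Ico.subset hx)
  filter_upwards [Ioo_mem_nhdsGT hab] with x hx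
  exact hmono ⟨le_rfl, hab⟩ ⟨hx.1.le, hx.2⟩ hx.1

theorem eventually_nhdsLT_lt_of_deriv_neg (hf : ContinuousWithinAt f (Set.Iic a) a)
    (hderiv : ∀ᶠ x in 𝓝[<] a, deriv f x < 0) : ∀ᶠ x in 𝓝[<] a, f a < f x := by
  have hcont : ContinuousWithinAt (fun x => f (-x)) (Set.Ici (-a)) (-a) :=
    ContinuousWithinAt.comp (t := Set.Iic a) (by simpa using hf)
      continuous_neg.continuousWithinAt fun _ hx => neg_le.mp (Set.mem_Ici.mp hx)
  have hpos : ∀ᶠ x in 𝓝[>] (-a), 0 < deriv (fun y => f (-y)) x := by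
    filter_upwards [tendsto_neg_nhdsGT_neg.eventually hderiv] with x hx
    rw [deriv_comp_neg]
    exact neg_pos.mpr hx
  simpa using tendsto_neg_nhdsLT.eventually (eventually_nhdsGT_lt_of_deriv_pos hcont hpos)

theorem eventually_nhdsNE_lt_of_sign_deriv (hf : ContinuousAt f a)
    (hsign : ∀ᶠ x in 𝓝[≠] a, SignType.sign (deriv f x) = SignType.sign (x - a)) :
    ∀ᶠ x in 𝓝[≠] a, f a < f x := by
  rw [← nhdsLT_sup_nhdsGT, eventually_sup]
  exact ⟨eventually_nhdsLT_lt_of_deriv_neg hf.continuousWithinAt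
      (deriv_neg_left_of_sign_deriv hsign),
    eventually_nhdsGT_lt_of_deriv_pos hf.continuousWithinAt
      (deriv_pos_right_of_sign_deriv hsign)⟩

theorem eventually_nhdsNE_lt_of_deriv_deriv_pos (hf : ContinuousAt f a)
    (hcrit : deriv f a = 0) (hpos : 0 < deriv (deriv f) a) :
    ∀ᶠ x in 𝓝[≠] a, f a < f x :=
  eventually_nhdsNE_lt_of_sign_deriv hf <| nhdsWithin_le_nhds <|
    eventually_nhdsWithin_sign_eq_of_deriv_pos hpos hcrit

theorem eventually_nhdsNE_gt_of_deriv_deriv_neg (hf : ContinuousAt f a)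
    (hcrit : deriv f a = 0) (hneg : deriv (deriv f) a < 0) :
    ∀ᶠ x in 𝓝[≠] a, f x < f a := by
  simpa using eventually_nhdsNE_lt_of_deriv_deriv_pos hf.neg (by simpa) (by simpa)

end SecondDerivativeTest

theorem deriv_deriv_of_smul_deriv_eventuallyEq {𝕜 E : Type*} [NontriviallyNormedField 𝕜]
    [NormedAddCommGroup E] [NormedSpace 𝕜 E] {c : 𝕜 → 𝕜} {f F : 𝕜 → E} {a : 𝕜}
    (heq : (fun x => c x • deriv f x) =ᶠ[𝓝 a] F) (hc : DifferentiableAt 𝕜 c a)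
    (hF : DifferentiableAt 𝕜 F a) (hca : c a ≠ 0) (hcrit : deriv f a = 0) :
    deriv (deriv f) a = (c a)⁻¹ • deriv F a := by
  have hFa : F a = 0 := heq.self_of_nhds.symm.trans (smul_eq_zero_of_right _ hcrit)
  have hquot : deriv f =ᶠ[𝓝 a] fun x => (c x)⁻¹ • F x := by
    filter_upwards [heq, hc.continuousAt.eventually_ne hca] with x hx hcx
    rw [← hx, inv_smul_smul₀ hcx]
  rw [hquot.deriv_eq, deriv_fun_smul (hc.fun_inv hca) hF, hFa, smul_zero, add_zero]

theorem mul_pow_add_mul_pow_eq_zero_iff {K : Type*} [Field K] {a b c s : K} (n : ℕ)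
    (hb : b ≠ 0) (hc : c ≠ 0) : a * c ^ n + b * s ^ n = 0 ↔ (s / c) ^ n = -(a / b) := by
  rw [div_pow, ← neg_div, div_eq_div_iff (pow_ne_zero n hc) hb, add_comm, add_eq_zero_iff_eq_neg,
    neg_mul, mul_comm b]

theorem dupin_darboux_critical_angle_general
    (θ₁ θ₂ : ℝ → ℝ) (α : ℝ → ℝ) (σ₀ : ℝ) (hα : DifferentiableAt ℝ α σ₀)
    (hode : ∀ᶠ σ in 𝓝 σ₀,
      12 * Real.sin (α σ) * Real.cos (α σ) * deriv α σ
        = θ₁ σ * Real.cos (α σ) ^ 3 + θ₂ σ * Real.sin (α σ) ^ 3)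
    (hsc : Real.sin (α σ₀) * Real.cos (α σ₀) ≠ 0) :
    (deriv α σ₀ = 0 ↔ θ₁ σ₀ * Real.cos (α σ₀) ^ 3 + θ₂ σ₀ * Real.sin (α σ₀) ^ 3 = 0) ∧
    (θ₂ σ₀ ≠ 0 →
      (deriv α σ₀ = 0 ↔ Real.tan (α σ₀) ^ 3 = -(θ₁ σ₀ / θ₂ σ₀))) ∧
    (deriv α σ₀ = 0 →
      deriv (fun σ => θ₁ σ * Real.cos (α σ) ^ 3 + θ₂ σ * Real.sin (α σ) ^ 3) σ₀ ≠ 0 →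
      ((∀ᶠ σ in 𝓝[≠] σ₀, α σ < α σ₀) ∨ (∀ᶠ σ in 𝓝[≠] σ₀, α σ₀ < α σ))) := by
  have hc : 12 * Real.sin (α σ₀) * Real.cos (α σ₀) ≠ 0 := by
    rw [mul_assoc]
    exact mul_ne_zero (by norm_num) hsc
  have hcrit : deriv α σ₀ = 0 ↔
      θ₁ σ₀ * Real.cos (α σ₀) ^ 3 + θ₂ σ₀ * Real.sin (α σ₀) ^ 3 = 0 := by
    rw [← hode.self_of_nhds, mul_eq_zero_iff_left hc]
  refine ⟨hcrit, fun hθ₂ => ?_, fun hα' hF' => ?_⟩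
  · rw [hcrit, Real.tan_eq_sin_div_cos,
      mul_pow_add_mul_pow_eq_zero_iff 3 hθ₂ (right_ne_zero_of_mul hsc)]
  · have hα'' : deriv (deriv α) σ₀ ≠ 0 := by
      rw [deriv_deriv_of_smul_deriv_eventuallyEq hode (by fun_prop)
        (differentiableAt_of_deriv_ne_zero hF') hc hα']
      exact smul_ne_zero (inv_ne_zero hc) hF'
    exact hα''.lt_or_gt.imp (eventually_nhdsNE_gt_of_deriv_deriv_neg hα.continuousAt hα')
      (eventually_nhdsNE_lt_of_deriv_deriv_pos hα.continuousAt hα')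

/-- Along a Darboux line, critical points of the angle α with the curvature lines are
exactly the points where θ₁cos³α + θ₂sin³α = 0 (the Dupin directions), and generically
such critical points are strict local extrema of α. -/
theorem dupin_darboux_critical_angle
    (θ₁ θ₂ : ℝ → ℝ) (α : ℝ → ℝ) (σ₀ : ℝ)
    (hθ₁ : ContDiff ℝ 1 θ₁) (hθ₂ : ContDiff ℝ 1 θ₂) (hα : ContDiff ℝ 2 α)
    (hode : ∀ᶠ σ in 𝓝 σ₀,
      12 * Real.sin (α σ) * Real.cos (α σ) * deriv α σ
        = θ₁ σ * Real.cos (α σ) ^ 3 + θ₂ σ * Real.sin (α σ) ^ 3)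
    (hsc : Real.sin (α σ₀) * Real.cos (α σ₀) ≠ 0) :
    (deriv α σ₀ = 0 ↔ θ₁ σ₀ * Real.cos (α σ₀) ^ 3 + θ₂ σ₀ * Real.sin (α σ₀) ^ 3 = 0) ∧
    (θ₂ σ₀ ≠ 0 →
      (deriv α σ₀ = 0 ↔ Real.tan (α σ₀) ^ 3 = -(θ₁ σ₀ / θ₂ σ₀))) ∧
    (deriv α σ₀ = 0 →
      deriv (fun σ => θ₁ σ * Real.cos (α σ) ^ 3 + θ₂ σ * Real.sin (α σ) ^ 3) σ₀ ≠ 0 →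
      ((∀ᶠ σ in 𝓝[≠] σ₀, α σ < α σ₀) ∨ (∀ᶠ σ in 𝓝[≠] σ₀, α σ₀ < α σ))) :=
  dupin_darboux_critical_angle_general θ₁ θ₂ α σ₀ (hα.differentiable two_ne_zero σ₀) hode hsc
end
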